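/- arXiv:1711.01936 — 2 statements merged into one kernel-verified Lean document; each statement's English description precedes it below -/
import Mathlib

section
/- (Convergence of the PC-algorithm II with outer perturbations.) Let ν ∈ (0,1), μ ∈ [0, 1 − ν) and γ ∈ (0,2). Let {e1^k}, {e2^k} be sequences in H with Σ_{k=0}^∞ ‖e1^k‖ < +∞ and Σ_{k=0}^∞ ‖e2^k‖ < +∞. Let x^0 ∈ H and let {x^k}, {y^k}, {β_k} satisfy, for every k ≥ 0: β_k > 0 with inf_k β_k > 0; y^k = P_C(x^k − β_k F(x^k) + e1^k); β_k‖F(x^k) − F(y^k)‖ ≤ ν‖x^k − y^k‖; ‖e1^k‖ ≤ μ‖x^k − y^k‖; d^k := (x^k − y^k) − β_k(F(x^k) − F(y^k)) + e1^k ≠ 0; ρ_k := ⟨x^k − y^k, d^k⟩/‖d^k‖²; and x^{k+1} = P_C(x^k − γ ρ_k β_k F(y^k) + e2^k). Then {x^k} converges weakly (i.e., ⟨x^k, u⟩ → ⟨x̂, u⟩ for every u ∈ H) to some point x̂ ∈ SOL(C,F). -/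
open RealInnerProductSpace

lemma aux_conv (a ε : ℕ → ℝ) (ha : ∀ k, 0 ≤ a k) (hε : ∀ k, 0 ≤ ε k) (hs : Summable ε)
    (h : ∀ k, a (k+1) ≤ a k + 2 * ε k) : ∃ l, Filter.Tendsto a Filter.atTop (nhds l) := by
  have hb : Antitone (fun k => a k - 2 * ∑ i ∈ Finset.range k, ε i) := by
    apply antitone_nat_of_succ_le
    intro k
    rw [Finset.sum_range_succ]
    linarith [h k]
  have hbd : BddBelow (Set.range (fun k => a k - 2 * ∑ i ∈ Finset.range k, ε i)) := by
    refine ⟨-(2 * ∑' i, ε i), ?_⟩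
    rintro _ ⟨k, rfl⟩
    have := hs.sum_le_tsum (Finset.range k) (fun i _ => hε i)
    simp only
    linarith [ha k]
  have h1 := tendsto_atTop_ciInf hb hbd
  have h2 := (hs.hasSum.tendsto_sum_nat).const_mul 2
  refine ⟨_, (h1.add h2).congr ?_⟩
  intro k
  ring

lemma aux_weak {H : Type*} [NormedAddCommGroup H] [InnerProductSpace ℝ H]
    [CompleteSpace H] (x : ℕ → H) (R : ℝ) (hR : ∀ k, ‖x k‖ ≤ R) (U : Ultrafilter ℕ) :
    ∃ z : H, ∀ u : H, Filter.Tendsto (fun k => ⟪x k, u⟫) U (nhds ⟪z, u⟫) := by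
  have hc := WeakDual.isCompact_closedBall (0 : StrongDual ℝ H) R
  let g : ℕ → WeakDual ℝ H := fun k => StrongDual.toWeakDual (InnerProductSpace.toDual ℝ H (x k))
  obtain ⟨f, hf, hlim⟩ := hc.ultrafilter_le_nhds (U.map g) (by
    rw [Filter.le_principal_iff]
    refine Filter.Eventually.of_forall (f := (U : Filter ℕ)) (fun k => ?_)
    simpa [g] using hR k)
  refine ⟨(InnerProductSpace.toDual ℝ H).symm (WeakDual.toStrongDual f), fun u => ?_⟩
  have h1 : Filter.Tendsto g U (nhds f) := hlim
  have h2 := ((WeakDual.eval_continuous u).tendsto f).comp h1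
  rw [InnerProductSpace.toDual_symm_apply]
  exact h2

/-- one step of the iteration -/
lemma aux_step {H : Type*} [NormedAddCommGroup H] [InnerProductSpace ℝ H]
    (x y x' p d e Fy : H) (β ρ γ : ℝ) (hβ : 0 < β) (hρ : 0 ≤ ρ) (hγ : 0 < γ)
    (h1 : ⟪x - (γ * ρ * β) • Fy + e - x', p - x'⟫ ≤ 0)
    (h2 : 0 ≤ ⟪Fy, y - p⟫)
    (h3 : ⟪d - β • Fy, x' - y⟫ ≤ 0)
    (h4 : ρ * ‖d‖ ^ 2 = ⟪x - y, d⟫) :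
    ‖x' - p‖ ^ 2 ≤ ‖x - p‖ ^ 2 - γ * (2 - γ) * (ρ * ‖d‖) ^ 2 + 2 * (‖e‖ * ‖x' - p‖) := by
  have hcs := real_inner_le_norm e (x' - p)
  have e1 : ‖x - p‖ ^ 2 = ‖x - x'‖ ^ 2 + 2 * ⟪x - x', x' - p⟫ + ‖x' - p‖ ^ 2 := by
    rw [← norm_add_sq_real]; congr 2; abel
  have e2 : ‖(x - x') - (γ * ρ) • d‖ ^ 2
      = ‖x - x'‖ ^ 2 - 2 * ((γ * ρ) * ⟪x - x', d⟫) + (γ * ρ) ^ 2 * ‖d‖ ^ 2 := by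
    rw [norm_sub_sq_real, inner_smul_right, norm_smul, mul_pow, Real.norm_eq_abs, sq_abs]
  have e3 : ⟪x - (γ * ρ * β) • Fy + e - x', p - x'⟫
      = -⟪x - x', x' - p⟫ + (γ * ρ * β) * (⟪Fy, x' - y⟫ + ⟪Fy, y - p⟫) - ⟪e, x' - p⟫ := by
    simp only [inner_sub_left, inner_sub_right, inner_add_left, real_inner_smul_left]
    ring
  have e4 : ⟪d - β • Fy, x' - y⟫ = -⟪x - x', d⟫ + ⟪x - y, d⟫ - β * ⟪Fy, x' - y⟫ := by
    rw [real_inner_comm d (x - x'), real_inner_comm d (x - y)]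
    simp only [inner_sub_left, inner_sub_right, real_inner_smul_left]
    ring
  have hgr : 0 ≤ γ * ρ := by positivity
  have m1 : 0 ≤ γ * ρ * (β * ⟪Fy, x' - y⟫ - (-⟪x - x', d⟫ + ρ * ‖d‖ ^ 2)) :=
    mul_nonneg hgr (by linarith)
  have m2 : 0 ≤ γ * ρ * β * ⟪Fy, y - p⟫ := by positivity
  have m3 := sq_nonneg ‖(x - x') - (γ * ρ) • d‖
  nlinarith

/-- Minty -/
lemma aux_minty {H : Type*} [NormedAddCommGroup H] [InnerProductSpace ℝ H]
    (C : Set H) (hCcv : Convex ℝ C) (F : H → H)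
    (L : ℝ) (hL : 0 < L) (hLip : ∀ u v : H, ‖F u - F v‖ ≤ L * ‖u - v‖)
    (z : H) (hz : z ∈ C) (h : ∀ c ∈ C, 0 ≤ ⟪F c, c - z⟫) : ∀ c ∈ C, 0 ≤ ⟪F z, c - z⟫ := by
  intro c hc
  have hF : Continuous F := by
    have : LipschitzWith L.toNNReal F := by
      apply LipschitzWith.of_dist_le_mul
      intro u v
      rw [dist_eq_norm, dist_eq_norm, Real.coe_toNNReal _ hL.le]
      exact hLip u v
    exact this.continuous
  have hcont : Continuous (fun t : ℝ => ⟪F (z + t • (c - z)), c - z⟫) := by fun_prop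
  have ht : Filter.Tendsto (fun t : ℝ => ⟪F (z + t • (c - z)), c - z⟫) (nhdsWithin 0 (Set.Ioi 0))
      (nhds ⟪F z, c - z⟫) := by
    have := hcont.tendsto 0
    simp only [zero_smul, add_zero] at this
    exact this.mono_left nhdsWithin_le_nhds
  refine ge_of_tendsto ht ?_
  filter_upwards [Ioc_mem_nhdsGT (zero_lt_one (α := ℝ))] with t ht
  have := h (z + t • (c - z)) (hCcv.add_smul_sub_mem hz hc ⟨ht.1.le, ht.2⟩)
  rw [add_sub_cancel_left, inner_smul_right] at this
  exact nonneg_of_mul_nonneg_right this ht.1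

theorem stmt_7 {H : Type*} [NormedAddCommGroup H] [InnerProductSpace ℝ H]
    [CompleteSpace H]
    (C : Set H) (hCne : C.Nonempty) (hCcl : IsClosed C) (hCcv : Convex ℝ C)
    (P : H → H) (hPmem : ∀ u : H, P u ∈ C)
    (hPchar : ∀ u : H, ∀ c ∈ C, ⟪u - P u, c - P u⟫ ≤ 0)
    (F : H → H) (hmono : ∀ u v : H, 0 ≤ ⟪F u - F v, u - v⟫)
    (L : ℝ) (hL : 0 < L) (hLip : ∀ u v : H, ‖F u - F v‖ ≤ L * ‖u - v‖)
    (hSOL : ∃ p ∈ C, ∀ z ∈ C, 0 ≤ ⟪F p, z - p⟫)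
    (ν μ γ : ℝ) (hν : ν ∈ Set.Ioo (0 : ℝ) 1) (hμ : μ ∈ Set.Ico (0 : ℝ) (1 - ν))
    (hγ : γ ∈ Set.Ioo (0 : ℝ) 2)
    (e1 e2 : ℕ → H)
    (he1 : Summable (fun k => ‖e1 k‖)) (he2 : Summable (fun k => ‖e2 k‖))
    (x y : ℕ → H) (β : ℕ → ℝ) (d : ℕ → H) (ρ : ℕ → ℝ)
    (hβpos : ∀ k, 0 < β k) (hβinf : ∃ b > (0 : ℝ), ∀ k, b ≤ β k)
    (hy : ∀ k, y k = P (x k - β k • F (x k) + e1 k))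
    (hstep : ∀ k, β k * ‖F (x k) - F (y k)‖ ≤ ν * ‖x k - y k‖)
    (he1b : ∀ k, ‖e1 k‖ ≤ μ * ‖x k - y k‖)
    (hd : ∀ k, d k = (x k - y k) - β k • (F (x k) - F (y k)) + e1 k)
    (hdne : ∀ k, d k ≠ 0)
    (hρ : ∀ k, ρ k = ⟪x k - y k, d k⟫ / ‖d k‖ ^ 2)
    (hx : ∀ k, x (k + 1) = P (x k - (γ * ρ k * β k) • F (y k) + e2 k)) :
    ∃ xhat, (xhat ∈ C ∧ ∀ z ∈ C, 0 ≤ ⟪F xhat, z - xhat⟫) ∧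
      ∀ u : H, Filter.Tendsto (fun k => ⟪x k, u⟫) Filter.atTop (nhds ⟪xhat, u⟫) := by
  obtain ⟨b, hb0, hb⟩ := hβinf
  obtain ⟨hν0, hν1⟩ := hν
  obtain ⟨hμ0, hμ1⟩ := hμ
  obtain ⟨hγ0, hγ2⟩ := hγ
  have hyC : ∀ k, y k ∈ C := fun k => by rw [hy k]; exact hPmem _
  -- projection inequality for y
  have hyP : ∀ k, ∀ c ∈ C, ⟪d k - β k • F (y k), c - y k⟫ ≤ 0 := by
    intro k c hc
    have := hPchar (x k - β k • F (x k) + e1 k) c hc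
    rw [← hy k] at this
    convert this using 2
    rw [hd k, smul_sub]; abel
  -- bounds on d
  have hdE : ∀ k, ‖d k - (x k - y k)‖ ≤ (ν + μ) * ‖x k - y k‖ := by
    intro k
    have : d k - (x k - y k) = e1 k - β k • (F (x k) - F (y k)) := by rw [hd k]; abel
    rw [this]
    refine (norm_sub_le _ _).trans ?_
    rw [norm_smul, Real.norm_eq_abs, abs_of_pos (hβpos k)]
    linarith [hstep k, he1b k]
  have hdU : ∀ k, ‖d k‖ ≤ (1 + ν + μ) * ‖x k - y k‖ := by
    intro k
    have := norm_add_le (d k - (x k - y k)) (x k - y k)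
    rw [sub_add_cancel] at this
    linarith [hdE k]
  have hdI : ∀ k, (1 - ν - μ) * ‖x k - y k‖ ^ 2 ≤ ⟪x k - y k, d k⟫ := by
    intro k
    have h1 : ⟪x k - y k, d k⟫ = ‖x k - y k‖ ^ 2 + ⟪x k - y k, d k - (x k - y k)⟫ := by
      rw [inner_sub_right, real_inner_self_eq_norm_sq]; ring
    have h2 := (abs_le.1 (abs_real_inner_le_norm (x k - y k) (d k - (x k - y k)))).1
    have h3 := mul_le_mul_of_nonneg_left (hdE k) (norm_nonneg (x k - y k))
    nlinarith
  have hdpos : ∀ k, 0 < ‖d k‖ := fun k => norm_pos_iff.2 (hdne k)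
  have hρd : ∀ k, ρ k * ‖d k‖ ^ 2 = ⟪x k - y k, d k⟫ := by
    intro k
    rw [hρ k, div_mul_cancel₀]
    exact (pow_pos (hdpos k) 2).ne'
  have hρ0 : ∀ k, 0 ≤ ρ k := by
    intro k
    rw [hρ k]
    refine div_nonneg (le_trans ?_ (hdI k)) (sq_nonneg _)
    have : 0 ≤ 1 - ν - μ := by linarith
    positivity
  have hκ : 0 < 1 - ν - μ := by linarith
  have hκ' : 0 < 1 + ν + μ := by linarith
  -- ρ‖d‖ bound
  have hρL : ∀ k, (1 - ν - μ) / (1 + ν + μ) * ‖x k - y k‖ ≤ ρ k * ‖d k‖ := by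
    intro k
    have h1 : (1 - ν - μ) * ‖x k - y k‖ ^ 2 ≤ (ρ k * ‖d k‖) * ((1 + ν + μ) * ‖x k - y k‖) := by
      have := mul_le_mul_of_nonneg_left (hdU k) (mul_nonneg (hρ0 k) (norm_nonneg (d k)))
      have h2 := hdI k
      rw [← hρd k] at h2
      nlinarith
    have hpos : 0 < ‖x k - y k‖ := by
      by_contra hcon
      have h0 : ‖x k - y k‖ = 0 := le_antisymm (not_lt.1 hcon) (norm_nonneg _)
      have := hdU k
      rw [h0] at this
      linarith [hdpos k]
    rw [div_mul_eq_mul_div, div_le_iff₀ hκ']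
    refine le_of_mul_le_mul_right ?_ hpos
    nlinarith
  set κ := (1 - ν - μ) / (1 + ν + μ) with hκdef
  have hκpos : 0 < κ := div_pos hκ hκ'
  have hc0 : 0 < γ * (2 - γ) * κ ^ 2 := by
    have : 0 < 2 - γ := by linarith
    positivity
  -- main inequality
  have hmain : ∀ p ∈ C, (∀ z ∈ C, 0 ≤ ⟪F p, z - p⟫) → ∀ k,
      ‖x (k+1) - p‖ ^ 2 ≤ ‖x k - p‖ ^ 2 - γ * (2 - γ) * κ ^ 2 * ‖x k - y k‖ ^ 2
        + 2 * (‖e2 k‖ * ‖x (k+1) - p‖) := by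
    intro p hp hpS k
    have h1 := hPchar (x k - (γ * ρ k * β k) • F (y k) + e2 k) p hp
    rw [← hx k] at h1
    have h2 : 0 ≤ ⟪F (y k), y k - p⟫ := by
      have := hmono (y k) p
      rw [inner_sub_left] at this
      linarith [hpS (y k) (hyC k)]
    have h3 := hyP k (x (k+1)) (by rw [hx k]; exact hPmem _)
    have h := aux_step (x k) (y k) (x (k+1)) p (d k) (e2 k) (F (y k)) (β k) (ρ k) γ
      (hβpos k) (hρ0 k) hγ0 h1 h2 h3 (hρd k)
    have hs : (κ * ‖x k - y k‖) ^ 2 ≤ (ρ k * ‖d k‖) ^ 2 :=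
      pow_le_pow_left₀ (by positivity) (hρL k) 2
    have hg : 0 ≤ γ * (2 - γ) := mul_nonneg hγ0.le (by linarith)
    have := mul_le_mul_of_nonneg_left hs hg
    rw [mul_pow] at this
    linarith
  have hconv : ∀ p ∈ C, (∀ z ∈ C, 0 ≤ ⟪F p, z - p⟫) →
      ∃ l, Filter.Tendsto (fun k => ‖x k - p‖) Filter.atTop (nhds l) := by
    intro p hp hpS
    refine aux_conv _ (fun k => ‖e2 k‖) (fun k => norm_nonneg _) (fun k => norm_nonneg _) he2 ?_
    intro k
    have h := hmain p hp hpS k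
    have h1 : 0 ≤ γ * (2 - γ) * κ ^ 2 * ‖x k - y k‖ ^ 2 := by positivity
    have h2 : (‖x (k+1) - p‖ - ‖e2 k‖) ^ 2 ≤ (‖x k - p‖ + ‖e2 k‖) ^ 2 := by
      nlinarith [mul_nonneg (norm_nonneg (x k - p)) (norm_nonneg (e2 k))]
    have h3 := abs_le_of_sq_le_sq h2 (by positivity)
    linarith [(abs_le.1 h3).2]
  obtain ⟨p, hp, hpS⟩ := hSOL
  obtain ⟨l, hl⟩ := hconv p hp hpS
  have he20 := he2.tendsto_atTop_zero
  have hl1 := (Filter.tendsto_add_atTop_iff_nat 1).2 hl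
  have hxy : Filter.Tendsto (fun k => ‖x k - y k‖) Filter.atTop (nhds 0) := by
    have h1 : Filter.Tendsto (fun k => (‖x k - p‖ ^ 2 - ‖x (k+1) - p‖ ^ 2
        + 2 * (‖e2 k‖ * ‖x (k+1) - p‖)) / (γ * (2 - γ) * κ ^ 2)) Filter.atTop (nhds 0) := by
      have := (((hl.pow 2).sub (hl1.pow 2)).add ((he20.mul hl1).const_mul 2)).div_const
        (γ * (2 - γ) * κ ^ 2)
      simpa using this
    have h2 : Filter.Tendsto (fun k => ‖x k - y k‖ ^ 2) Filter.atTop (nhds 0) := by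
      refine squeeze_zero (fun k => sq_nonneg _) (fun k => ?_) h1
      rw [le_div_iff₀ hc0]
      linarith [hmain p hp hpS k]
    have h3 := h2.sqrt
    simpa using h3
  have hd0 : Filter.Tendsto (fun k => ‖d k‖) Filter.atTop (nhds 0) := by
    refine squeeze_zero (fun k => norm_nonneg _) hdU ?_
    simpa using hxy.const_mul (1 + ν + μ)
  obtain ⟨R, hR⟩ : ∃ R, ∀ k, ‖x k‖ ≤ R := by
    obtain ⟨R, hR⟩ := hl.bddAbove_range
    refine ⟨R + ‖p‖, fun k => ?_⟩
    have h1 : ‖x k - p‖ ≤ R := hR ⟨k, rfl⟩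
    have h2 := norm_add_le (x k - p) p
    rw [sub_add_cancel] at h2
    linarith
  -- cluster points are solutions
  have hclus : ∀ U : Ultrafilter ℕ, (U : Filter ℕ) ≤ Filter.atTop → ∀ z : H,
      (∀ u : H, Filter.Tendsto (fun k => ⟪x k, u⟫) U (nhds ⟪z, u⟫)) →
      z ∈ C ∧ ∀ c ∈ C, 0 ≤ ⟪F z, c - z⟫ := by
    intro U hU z hz
    have hyz : ∀ u : H, Filter.Tendsto (fun k => ⟪y k, u⟫) U (nhds ⟪z, u⟫) := by
      intro u
      have h1 : Filter.Tendsto (fun k => ⟪x k - y k, u⟫) Filter.atTop (nhds 0) := by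
        refine squeeze_zero_norm (fun k => norm_inner_le_norm (x k - y k) u) ?_
        simpa using hxy.mul_const ‖u‖
      have h2 := (hz u).sub (h1.mono_left hU)
      rw [sub_zero] at h2
      refine h2.congr (fun k => ?_)
      rw [inner_sub_left]; ring
    have hzC : z ∈ C := by
      have h1 : Filter.Tendsto (fun k => ⟪y k, z - P z⟫ - ⟪P z, z - P z⟫) U
          (nhds (⟪z, z - P z⟫ - ⟪P z, z - P z⟫)) := (hyz _).sub_const _
      have h2 := le_of_tendsto h1 (b := 0) (Filter.Eventually.of_forall (fun k => by
        have := hPchar z (y k) (hyC k)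
        rw [← inner_sub_left, real_inner_comm]
        exact this))
      rw [← inner_sub_left, real_inner_self_eq_norm_sq] at h2
      have h3 : ‖z - P z‖ = 0 := by
        have := sq_nonneg ‖z - P z‖
        exact pow_eq_zero_iff (two_ne_zero) |>.1 (le_antisymm h2 this)
      rw [norm_eq_zero, sub_eq_zero] at h3
      rw [h3]; exact hPmem _
    refine ⟨hzC, aux_minty C hCcv F L hL hLip z hzC ?_⟩
    intro c hc
    have h1 : Filter.Tendsto (fun k => ⟪F c, c⟫ - ⟪y k, F c⟫
        + ‖d k‖ * (‖c‖ + R + ‖x k - y k‖) / b) U (nhds (⟪F c, c⟫ - ⟪z, F c⟫ + 0)) := by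
      refine ((hyz (F c)).const_sub _).add ?_
      have := ((hd0.mul (hxy.const_add (‖c‖ + R))).div_const b).mono_left hU
      simpa using this
    have h2 : 0 ≤ ⟪F c, c⟫ - ⟪z, F c⟫ + 0 := by
      refine ge_of_tendsto h1 (Filter.Eventually.of_forall (fun k => ?_))
      have a1 := hyP k c hc
      rw [inner_sub_left, real_inner_smul_left] at a1
      have a2 := hmono c (y k)
      rw [inner_sub_left] at a2
      have a3 := (abs_le.1 (abs_real_inner_le_norm (d k) (c - y k))).1
      have a4 : ‖c - y k‖ ≤ ‖c‖ + R + ‖x k - y k‖ := by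
        have : c - y k = c - x k + (x k - y k) := by abel
        rw [this]
        linarith [norm_add_le (c - x k) (x k - y k), norm_sub_le c (x k), hR k]
      have a5 := mul_le_mul_of_nonneg_left a4 (norm_nonneg (d k))
      have a6 : -(‖d k‖ * (‖c‖ + R + ‖x k - y k‖)) ≤ β k * ⟪F c, c - y k⟫ := by
        have := mul_le_mul_of_nonneg_left (sub_nonneg.1 a2) (hβpos k).le
        linarith
      have a7 : ⟪F c, c⟫ - ⟪y k, F c⟫ = ⟪F c, c - y k⟫ := by
        rw [inner_sub_right, real_inner_comm (F c) (y k)]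
      rw [a7]
      have hM : 0 ≤ ‖d k‖ * (‖c‖ + R + ‖x k - y k‖) :=
        mul_nonneg (norm_nonneg _) ((norm_nonneg _).trans a4)
      have hq : 0 ≤ ‖d k‖ * (‖c‖ + R + ‖x k - y k‖) / b := div_nonneg hM hb0.le
      by_contra hcon
      push Not at hcon
      have hq2 : ‖d k‖ * (‖c‖ + R + ‖x k - y k‖) / b * b = ‖d k‖ * (‖c‖ + R + ‖x k - y k‖) :=
        div_mul_cancel₀ _ hb0.ne'
      have hneg : ⟪F c, c - y k⟫ < -(‖d k‖ * (‖c‖ + R + ‖x k - y k‖) / b) := by linarith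
      have n1 := mul_lt_mul_of_pos_left hneg (hβpos k)
      have n2 := mul_le_mul_of_nonneg_right (hb k) hq
      nlinarith
    rw [inner_sub_right, real_inner_comm z (F c)]
    linarith
  -- Opial
  obtain ⟨xh, hxh⟩ := aux_weak x R hR (Ultrafilter.of Filter.atTop)
  have hle : ((Ultrafilter.of Filter.atTop : Ultrafilter ℕ) : Filter ℕ) ≤ Filter.atTop :=
    Ultrafilter.of_le _
  obtain ⟨hxC, hxS⟩ := hclus _ hle xh hxh
  refine ⟨xh, ⟨hxC, hxS⟩, fun u => ?_⟩
  rw [Filter.tendsto_iff_ultrafilter]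
  intro U hU
  obtain ⟨z, hz⟩ := aux_weak x R hR U
  obtain ⟨hzC, hzS⟩ := hclus U hU z hz
  suffices hzx : z = xh by rw [← hzx]; exact hz u
  obtain ⟨l1, hl1⟩ := hconv xh hxC hxS
  obtain ⟨l2, hl2⟩ := hconv z hzC hzS
  have hlim : Filter.Tendsto (fun k => ⟪x k, z - xh⟫) Filter.atTop
      (nhds ((l1 ^ 2 - l2 ^ 2 + (‖z‖ ^ 2 - ‖xh‖ ^ 2)) / 2)) := by
    refine ((((hl1.pow 2).sub (hl2.pow 2)).add_const _).div_const 2).congr (fun k => ?_)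
    rw [norm_sub_sq_real, norm_sub_sq_real, inner_sub_right]
    ring
  have q1 := tendsto_nhds_unique (hz (z - xh)) (hlim.mono_left hU)
  have q2 := tendsto_nhds_unique (hxh (z - xh)) (hlim.mono_left hle)
  have q3 : ⟪z - xh, z - xh⟫ = 0 := by rw [inner_sub_left, q1, q2, sub_self]
  exact sub_eq_zero.1 (inner_self_eq_zero.1 q3)
end

section
/- (One-step Fejér contraction of the PC-algorithm II step.) Let ν ∈ (0,1), γ ∈ (0,2), w ∈ H and x* ∈ SOL(C,F). Let β > 0 be such that β‖F(w) − F(y)‖ ≤ ν‖w − y‖, where y := P_C(w − β F(w)). Define d := (w − y) − β(F(w) − F(y)) and assume d ≠ 0; set ρ := ⟨w − y, d⟩/‖d‖² and x⁺ := P_C(w − γ ρ β F(y)). Then ‖x⁺ − x*‖² ≤ ‖w − x*‖² − γ(2 − γ)·ρ²·‖d‖². -/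
open RealInnerProductSpace

theorem stmt_19 {H : Type*} [NormedAddCommGroup H] [InnerProductSpace ℝ H]
    [CompleteSpace H]
    (C : Set H) (hCne : C.Nonempty) (hCcl : IsClosed C) (hCcv : Convex ℝ C)
    (P : H → H) (hPmem : ∀ u : H, P u ∈ C)
    (hPchar : ∀ u : H, ∀ c ∈ C, ⟪u - P u, c - P u⟫ ≤ 0)
    (F : H → H) (hmono : ∀ u v : H, 0 ≤ ⟪F u - F v, u - v⟫)
    (L : ℝ) (hL : 0 < L) (hLip : ∀ u v : H, ‖F u - F v‖ ≤ L * ‖u - v‖)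
    (ν γ : ℝ) (hν : ν ∈ Set.Ioo (0 : ℝ) 1) (hγ : γ ∈ Set.Ioo (0 : ℝ) 2)
    (w xstar : H) (hstar : xstar ∈ C ∧ ∀ z ∈ C, 0 ≤ ⟪F xstar, z - xstar⟫)
    (β : ℝ) (hβ : 0 < β) (y : H) (hy : y = P (w - β • F w))
    (hstep : β * ‖F w - F y‖ ≤ ν * ‖w - y‖)
    (d : H) (hd : d = (w - y) - β • (F w - F y)) (hdne : d ≠ 0)
    (ρ : ℝ) (hρ : ρ = ⟪w - y, d⟫ / ‖d‖ ^ 2)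
    (xplus : H) (hxplus : xplus = P (w - (γ * ρ * β) • F y)) :
    ‖xplus - xstar‖ ^ 2 ≤ ‖w - xstar‖ ^ 2 - γ * (2 - γ) * ρ ^ 2 * ‖d‖ ^ 2 := by
  obtain ⟨hν0, hν1⟩ := hν
  obtain ⟨hγ0, hγ2⟩ := hγ
  obtain ⟨hsC, hsV⟩ := hstar
  have hyC : y ∈ C := hy ▸ hPmem _
  have hxC : xplus ∈ C := hxplus ▸ hPmem _
  have hdpos : 0 < ‖d‖ ^ 2 := by positivity
  have hwd : ⟪w - y, d⟫ = ρ * ‖d‖ ^ 2 := by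
    rw [hρ]; field_simp
  have hρ0 : 0 ≤ ρ := by
    rw [hρ]
    apply div_nonneg _ hdpos.le
    rw [hd, inner_sub_right, real_inner_self_eq_norm_sq, inner_smul_right]
    have h1 := real_inner_le_norm (w - y) (F w - F y)
    have h2 := mul_le_mul_of_nonneg_left h1 hβ.le
    have h3 := mul_le_mul_of_nonneg_left hstep (norm_nonneg (w - y))
    nlinarith [sq_nonneg ‖w - y‖]
  have ht : 0 ≤ γ * ρ := mul_nonneg hγ0.le hρ0
  have hA := hPchar (w - (γ * ρ * β) • F y) xstar hsC
  rw [← hxplus] at hA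
  have hB := hPchar (w - β • F w) xplus hxC
  rw [← hy] at hB
  have hFy : 0 ≤ ⟪F y, y - xstar⟫ := by
    have h1 := hmono y xstar
    have h2 := hsV y hyC
    rw [inner_sub_left] at h1
    linarith
  have e1 : w - β • F w - y = d - β • F y := by
    rw [hd, smul_sub]; abel
  rw [e1, inner_sub_left, real_inner_smul_left] at hB
  have e2 : w - (γ * ρ * β) • F y - xplus = (w - xplus) - (γ * ρ * β) • F y := by abel
  rw [e2, inner_sub_left, real_inner_smul_left] at hA
  have e3 : ‖w - xstar‖ ^ 2 =
      ‖w - xplus‖ ^ 2 - 2 * ⟪w - xplus, xstar - xplus⟫ + ‖xplus - xstar‖ ^ 2 := by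
    rw [norm_sub_rev xplus xstar, ← norm_sub_sq_real]
    congr 2; abel
  have e4 : ⟪F y, xstar - xplus⟫ = - ⟪F y, xplus - y⟫ - ⟪F y, y - xstar⟫ := by
    simp only [inner_sub_right]; ring
  have e5 : ⟪d, xplus - y⟫ = ⟪w - y, d⟫ - ⟪w - xplus, d⟫ := by
    rw [real_inner_comm, ← inner_sub_left]; congr 1; abel
  have e6 : 0 ≤ ‖w - xplus‖ ^ 2 - 2 * (γ * ρ * ⟪w - xplus, d⟫) + (γ * ρ) ^ 2 * ‖d‖ ^ 2 := by
    have h := norm_sub_sq_real (w - xplus) ((γ * ρ) • d)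
    rw [real_inner_smul_right, norm_smul, mul_pow, Real.norm_eq_abs, sq_abs] at h
    rw [← h]; positivity
  have h7 : β * ⟪F y, xstar - xplus⟫ ≤ ⟪w - xplus, d⟫ - ρ * ‖d‖ ^ 2 := by
    rw [e4]
    have := mul_nonneg hβ.le hFy
    rw [e5, hwd] at hB
    linarith
  have h8 := mul_le_mul_of_nonneg_left h7 ht
  linarith
end
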